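/- Let M ∈ ℕ, let f ∈ C^{M,0}(ℝ) be integrable, and let 0 < x ≤ C for some C > 0. Then for any 0 < δ < 1, |∫_ℝ f(y) h(x,y) dy − f(0)| ≤ C(M, C, δ)·x^{M−δ}·( ‖f‖_{M,0} + ∫_ℝ |f| ). -/

import Mathlib

open MeasureTheory Filter Topology Set
open scoped BigOperators Classical

noncomputable section

/-- `e_q(x) := exp(2πix/q)`. -/
def eFun (q : ℕ) (x : ℝ) : ℂ := Complex.exp (2 * Real.pi * Complex.I * x / q)

/-- `F(z) = (1/2)⟨Az, z⟩` for an integer matrix `A`. -/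
def Fq {d : ℕ} (A : Matrix (Fin d) (Fin d) ℤ) (z : Fin d → ℝ) : ℝ :=
  (1 / 2) * ∑ i, ∑ j, (A i j : ℝ) * z i * z j

/-- The exponential sum `S_q(c; A, t)`. -/
def Sq {d : ℕ} (q : ℕ) (c : Fin d → ℤ) (A : Matrix (Fin d) (Fin d) ℤ) (t : ℤ) : ℂ :=
  ∑ a ∈ (Finset.range q).filter (fun a => Nat.Coprime a q),
    ∑ b : Fin d → Fin q,
      eFun q ((a : ℝ) * (Fq A (fun i => (b i : ℝ)) - (t : ℝ)) + ∑ i, (c i : ℝ) * (b i : ℝ))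

/-- `σ_p(A,t) = Σ_l p^{-dl} S_{p^l}(0; A, t)`. -/
def sigmaP {d : ℕ} (p : ℕ) (A : Matrix (Fin d) (Fin d) ℤ) (t : ℤ) : ℂ :=
  ∑' l : ℕ, ((p : ℂ) ^ (d * l))⁻¹ * Sq (p ^ l) 0 A t

/-- `σ(A,t) = Π_p σ_p(A,t)`. -/
def sigmaA {d : ℕ} (A : Matrix (Fin d) (Fin d) ℤ) (t : ℤ) : ℂ :=
  ∏' p : Nat.Primes, sigmaP (p : ℕ) A t

/-- `σ*(A) = Π_p (1 - p⁻¹) σ_p(A,0)`. -/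
def sigmaStar {d : ℕ} (A : Matrix (Fin d) (Fin d) ℤ) : ℂ :=
  ∏' p : Nat.Primes, (1 - ((p : ℕ) : ℂ)⁻¹) * sigmaP (p : ℕ) A 0

/-- The weight `w₀`. -/
def wZero (x : ℝ) : ℝ := if |x| < 1 then Real.exp (1 / (x ^ 2 - 1)) else 0

def cZero : ℝ := ∫ x : ℝ, wZero x

def omegaFun (x : ℝ) : ℝ := (4 / cZero) * wZero (4 * x - 3)

/-- The function `h(x,y) = Σ_{j≥1} (1/(xj)) [ω(xj) − ω(|y|/(xj))]`. -/
def hFun (x y : ℝ) : ℝ :=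
  ∑' j : ℕ, (1 / (x * ((j : ℝ) + 1))) *
    (omegaFun (x * ((j : ℝ) + 1)) - omegaFun (|y| / (x * ((j : ℝ) + 1))))

/-- Japanese bracket `⟨z⟩ = max(1, ‖z‖)`. -/
def jap {d : ℕ} (z : Fin d → ℝ) : ℝ := max 1 ‖z‖

def normSet {d : ℕ} (n1 : ℕ) (n2 : ℝ) (f : (Fin d → ℝ) → ℝ) : Set ℝ :=
  {r | ∃ (k : ℕ) (z : Fin d → ℝ), k ≤ n1 ∧ r = ‖iteratedFDeriv ℝ k f z‖ * jap z ^ n2}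

/-- The norm `‖f‖_{n1,n2}`. -/
def wNorm {d : ℕ} (n1 : ℕ) (n2 : ℝ) (f : (Fin d → ℝ) → ℝ) : ℝ := sSup (normSet n1 n2 f)

/-- Membership in the class `C^{n1,n2}`. -/
def MemC {d : ℕ} (n1 : ℕ) (n2 : ℝ) (f : (Fin d → ℝ) → ℝ) : Prop :=
  ContDiff ℝ n1 f ∧ BddAbove (normSet n1 n2 f)

def jap1 (y : ℝ) : ℝ := max 1 |y|

def normSet1 (n1 : ℕ) (n2 : ℝ) (f : ℝ → ℝ) : Set ℝ :=
  {r | ∃ (k : ℕ) (y : ℝ), k ≤ n1 ∧ r = |iteratedDeriv k f y| * jap1 y ^ n2}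

def wNorm1 (n1 : ℕ) (n2 : ℝ) (f : ℝ → ℝ) : ℝ := sSup (normSet1 n1 n2 f)

def MemC1 (n1 : ℕ) (n2 : ℝ) (f : ℝ → ℝ) : Prop :=
  ContDiff ℝ n1 f ∧ BddAbove (normSet1 n1 n2 f)

/-- `N_L(w; A, m) = Σ_{z ∈ L⁻¹ℤ^d, F(z)=m} w(z)`. -/
def NL {d : ℕ} (A : Matrix (Fin d) (Fin d) ℤ) (L m : ℝ) (w : (Fin d → ℝ) → ℝ) : ℝ :=
  ∑' v : Fin d → ℤ,
    if Fq A (fun i => (v i : ℝ) / L) = m then w (fun i => (v i : ℝ) / L) else 0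

/-- `σ_∞(w; A, m)` as a limit. -/
def IsSigmaInf {d : ℕ} (A : Matrix (Fin d) (Fin d) ℤ) (m : ℝ) (w : (Fin d → ℝ) → ℝ)
    (s : ℝ) : Prop :=
  Tendsto (fun ε : ℝ => (1 / (2 * ε)) * ∫ z in {z : Fin d → ℝ | |Fq A z - m| ≤ ε}, w z)
    (nhdsWithin 0 (Set.Ioi 0)) (nhds s)

def intCast' {d : ℕ} (c : Fin d → ℤ) : Fin d → ℝ := fun i => (c i : ℝ)

/-- the matrix of `F_d(x,y) = Σ x_i y_i` on `ℤ^{2s}`. -/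
def Ad (s : ℕ) : Matrix (Fin (2 * s)) (Fin (2 * s)) ℤ :=
  fun i j => if i.val + s = j.val ∨ j.val + s = i.val then 1 else 0

/-- `F(z) = (1/2)⟨Az, z⟩` for a real matrix `A`. -/
def FqR {d : ℕ} (A : Matrix (Fin d) (Fin d) ℝ) (z : Fin d → ℝ) : ℝ :=
  (1 / 2) * ∑ i, ∑ j, A i j * z i * z j


theorem em_bound (M : ℕ) (hM : 1 ≤ M) (g : ℕ → ℝ → ℝ)
    (hd : ∀ k < M, ∀ s, HasDerivAt (g k) (g (k+1) s) s)
    (u : ℤ → ℝ) (hu : Summable u)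
    (hgu : ∀ k, 1 ≤ k → k ≤ M → ∀ n : ℤ, ∀ s ∈ Ioo (-1 : ℝ) 2, |g k (s + n)| ≤ u n)
    (hs0 : Summable fun n : ℤ => g 0 n)
    (hi : Integrable (g 0)) (hi0 : ∫ s, g 0 s = 0)
    (v : ℤ → ℝ) (hv : Summable v)
    (hgv : ∀ n : ℤ, ∀ s ∈ Icc (0 : ℝ) 1, ∀ s' ∈ Icc (0 : ℝ) 1,
      |g M (s + n) - g M (s' + n)| ≤ v n) :
    |∑' n : ℤ, g 0 n| ≤ ∑' n, v n := by
  set S : ℕ → ℝ → ℝ := fun k s => ∑' n : ℤ, g k (s + n) with hS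
  have hI : Icc (0 : ℝ) 1 ⊆ Ioo (-1) 2 := fun x hx => ⟨by linarith [hx.1], by linarith [hx.2]⟩
  have hper : ∀ k, S k 0 = S k 1 := by
    intro k
    simp only [hS]
    rw [← (Equiv.addRight (1 : ℤ)).tsum_eq]
    refine tsum_congr fun n => ?_
    simp only [Equiv.coe_addRight, Int.cast_add, Int.cast_one]
    congr 1; ring
  have hsum : ∀ k, 1 ≤ k → k ≤ M → ∀ s ∈ Ioo (-1 : ℝ) 2, Summable fun n : ℤ => g k (s + n) :=
    fun k h1 h2 s hs => Summable.of_norm_bounded hu (fun n => hgu k h1 h2 n s hs)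
  have hadd : ∀ k < M, ∀ (n : ℤ) (s : ℝ), HasDerivAt (fun s => g k (s + n)) (g (k+1) (s + n)) s := by
    intro k hk n s
    exact HasDerivAt.comp_add_const s (n : ℝ) (hd k hk (s + n))
  have hder : ∀ k < M, ∀ s ∈ Ioo (-1 : ℝ) 2, HasDerivAt (S k) (S (k+1) s) s := by
    intro k hk s hs
    refine hasDerivAt_tsum_of_isPreconnected (g := fun (n : ℤ) s => g k (s + n))
      (g' := fun (n : ℤ) s => g (k+1) (s + n)) hu isOpen_Ioo isPreconnected_Ioo
      (fun n y _ => hadd k hk n y) (fun n y hy => hgu (k+1) (by omega) (by omega) n y hy)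
      (y₀ := 0) (by norm_num) ?_ hs
    rcases Nat.eq_zero_or_pos k with rfl | hk0
    · simpa using hs0
    · exact hsum k hk0 hk.le 0 (by norm_num)
  have hz0 : ∃ c ∈ Ioo (0 : ℝ) 1, S 0 c = 0 := by
    have hc : Continuous (g 0) :=
      continuous_iff_continuousAt.2 fun s => (hd 0 (by omega) s).continuousAt
    set P : ℝ → ℝ := fun t => ∫ z in (0 : ℝ)..t, g 0 z with hP
    have hPd : ∀ t, HasDerivAt P (g 0 t) t := fun t =>
      intervalIntegral.integral_hasDerivAt_right (hc.intervalIntegrable _ _)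
        (hc.stronglyMeasurableAtFilter _ _) hc.continuousAt
    set Q : ℝ → ℝ := fun s => ∑' n : ℤ, (P (s + n) - P n) with hQ
    have hb : ∀ (n : ℤ), ∀ s ∈ Ioo (-1 : ℝ) 2, ‖g 0 (s + n)‖ ≤ |g 0 n| + 2 * u n := by
      intro n s hs
      have h1 := (convex_Ioo (-1 : ℝ) 2).norm_image_sub_le_of_norm_hasDerivWithin_le
        (f := fun s => g 0 (s + n)) (f' := fun s => g 1 (s + n)) (C := u n)
        (fun x _ => (hadd 0 (by omega) n x).hasDerivWithinAt)
        (fun x hx => hgu 1 le_rfl hM n x hx) (x := 0) (by norm_num) hs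
      simp only [zero_add, sub_zero] at h1
      have h2 : ‖s‖ ≤ 2 := by
        rw [Real.norm_eq_abs, abs_le]; constructor <;> linarith [hs.1, hs.2]
      have h3 : 0 ≤ u n := (abs_nonneg _).trans (hgu 1 le_rfl hM n 0 (by norm_num))
      have h4 : ‖g 0 (s + n)‖ ≤ ‖g 0 n‖ + ‖g 0 (s + n) - g 0 n‖ := by
        have := norm_add_le (g 0 n) (g 0 (s + n) - g 0 n)
        simpa using this
      rw [Real.norm_eq_abs (g 0 n)] at h4
      nlinarith
    have hQd : ∀ s ∈ Ioo (-1 : ℝ) 2, HasDerivAt Q (S 0 s) s := by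
      intro s hs
      refine hasDerivAt_tsum_of_isPreconnected (g := fun (n : ℤ) s => P (s + n) - P n)
        (g' := fun (n : ℤ) s => g 0 (s + n)) (hs0.abs.add (hu.mul_left 2))
        isOpen_Ioo isPreconnected_Ioo ?_ hb (y₀ := 0) (by norm_num) ?_ hs
      · intro n y _
        exact (HasDerivAt.comp_add_const y (n : ℝ) (hPd (y + n))).sub_const _
      · simp
    have hQ0 : Q 0 = 0 := by simp [hQ]
    have hQ1 : Q 1 = 0 := by
      have h := (hi.hasSum_intervalIntegral 0).tsum_eq
      rw [hi0] at h
      rw [← h]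
      simp only [hQ]
      refine tsum_congr fun n => ?_
      simp only [hP]
      rw [intervalIntegral.integral_interval_sub_left (hc.intervalIntegrable _ _)
        (hc.intervalIntegrable _ _)]
      congr 1 <;> ring
    exact exists_hasDerivAt_eq_zero (by norm_num)
      (fun x hx => (hQd x (hI hx)).continuousAt.continuousWithinAt) (by rw [hQ0, hQ1])
      (fun x hx => hQd x (hI (Ioo_subset_Icc_self hx)))
  have hz : ∀ k ≤ M, ∃ c ∈ Ioo (0 : ℝ) 1, S k c = 0 := by
    intro k hk
    rcases k with _ | k
    · exact hz0
    · exact exists_hasDerivAt_eq_zero (by norm_num)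
        (fun x hx => (hder k (by omega) x (hI hx)).continuousAt.continuousWithinAt) (hper k)
        (fun x hx => hder k (by omega) x (hI (Ioo_subset_Icc_self hx)))
  have hmain : ∀ j ≤ M, ∀ s ∈ Icc (0 : ℝ) 1, |S (M - j) s| ≤ ∑' n, v n := by
    intro j
    induction j with
    | zero =>
      intro _ s hs
      obtain ⟨c, hc, hc0⟩ := hz M le_rfl
      have hc' := Ioo_subset_Icc_self hc
      have : S M s = ∑' n : ℤ, (g M (s + n) - g M (c + n)) := by
        rw [(hsum M hM le_rfl s (hI hs)).tsum_sub (hsum M hM le_rfl c (hI hc'))]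
        change _ = S M s - S M c
        rw [hc0, sub_zero]
      rw [Nat.sub_zero, this, ← Real.norm_eq_abs]
      exact tsum_of_norm_bounded hv.hasSum (fun n => hgv n s hs c hc')
    | succ j ih =>
      intro hj s hs
      obtain ⟨c, hc, hc0⟩ := hz (M - (j+1)) (by omega)
      have hc' := Ioo_subset_Icc_self hc
      have hk : M - j = M - (j+1) + 1 := by omega
      have ih' := ih (by omega)
      rw [hk] at ih'
      have h1 := (convex_Icc (0 : ℝ) 1).norm_image_sub_le_of_norm_hasDerivWithin_le
        (fun x hx => (hder (M - (j+1)) (by omega) x (hI hx)).hasDerivWithinAt)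
        (fun x hx => ih' x hx) hc' hs
      rw [hc0, sub_zero] at h1
      have h2 : ‖s - c‖ ≤ 1 := by
        rw [Real.norm_eq_abs, abs_le]; constructor <;> linarith [hs.1, hs.2, hc'.1, hc'.2]
      have h3 := (abs_nonneg _).trans (ih' s hs)
      rw [Real.norm_eq_abs] at h1
      nlinarith
  have := hmain M le_rfl 0 (by norm_num)
  simpa [hS] using this

/-- smooth compactly supported functions -/
def IsTest (K : ℝ → ℝ) : Prop := ContDiff ℝ ((⊤ : ℕ∞) : WithTop ℕ∞) K ∧ HasCompactSupport K

theorem IsTest.deriv {K : ℝ → ℝ} (h : IsTest K) : IsTest (deriv K) := by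
  refine ⟨?_, h.2.deriv⟩
  have h1 : ContDiff ℝ (((⊤ : ℕ∞) : WithTop ℕ∞) + 1) K := h.1
  exact (contDiff_succ_iff_deriv.1 h1).2.2

theorem IsTest.id_mul {K : ℝ → ℝ} (h : IsTest K) : IsTest (fun u => u * K u) :=
  ⟨contDiff_id.mul h.1, h.2.mul_left⟩

theorem IsTest.pow_mul {K : ℝ → ℝ} (h : IsTest K) (k : ℕ) : IsTest (fun u => u ^ k * K u) :=
  ⟨(contDiff_id.pow k).mul h.1, h.2.mul_left⟩

theorem IsTest.iter {K : ℝ → ℝ} (h : IsTest K) (k : ℕ) : IsTest (iteratedDeriv k K) := by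
  induction k with
  | zero => simpa using h
  | succ k ih => rw [iteratedDeriv_succ]; exact ih.deriv

theorem IsTest.hasDeriv {K : ℝ → ℝ} (h : IsTest K) (u : ℝ) : HasDerivAt K (_root_.deriv K u) u :=
  (h.1.differentiable (by simp) u).hasDerivAt

theorem IsTest.integrable {K : ℝ → ℝ} (h : IsTest K) : Integrable K :=
  h.1.continuous.integrable_of_hasCompactSupport h.2

theorem IsTest.bdd {K : ℝ → ℝ} (h : IsTest K) : ∃ S, 0 ≤ S ∧ ∀ u, |K u| ≤ S := by
  obtain ⟨C, hC⟩ := h.2.exists_bound_of_continuous h.1.continuous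
  exact ⟨C, (norm_nonneg _).trans (hC 0), hC⟩

/-- the dilation average -/
def TT (K f : ℝ → ℝ) (t : ℝ) : ℝ := ∫ u, f (t * u) * K u

theorem tt_integrable {K f : ℝ → ℝ} (hK : IsTest K) (hf : Continuous f) (t : ℝ) :
    Integrable (fun u => f (t * u) * K u) := by
  refine Continuous.integrable_of_hasCompactSupport ?_ hK.2.mul_left
  have := hK.1.continuous
  fun_prop

theorem tt_hasDerivAt {K f f' : ℝ → ℝ} (hK : IsTest K) (hf : ∀ y, HasDerivAt f (f' y) y)
    (hf' : Continuous f') (t : ℝ) :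
    HasDerivAt (TT K f) (TT (fun u => u * K u) f' t) t := by
  have hKc := hK.1.continuous
  have hfc : Continuous f := continuous_iff_continuousAt.2 fun s => (hf s).continuousAt
  obtain ⟨R, hR⟩ : ∃ R, ∀ u, K u ≠ 0 → |u| ≤ R := by
    obtain ⟨R, hR⟩ := hK.2.isCompact.isBounded.exists_norm_le
    exact ⟨R, fun u hu => hR u (subset_tsupport _ hu)⟩
  obtain ⟨B, hB⟩ := (isCompact_Icc (a := -((|t|+1)*R)) (b := (|t|+1)*R)).exists_bound_of_continuousOn
    hf'.continuousOn
  refine (hasDerivAt_integral_of_dominated_loc_of_deriv_le (μ := volume) (s := Metric.ball t 1)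
    (F := fun t u => f (t * u) * K u)
    (F' := fun t u => f' (t * u) * (u * K u)) (bound := fun u => B * |u * K u|)
    (Metric.ball_mem_nhds t one_pos) ?_ (tt_integrable hK hfc t) ?_ ?_ ?_ ?_).2
  · exact Eventually.of_forall fun s => (tt_integrable hK hfc s).aestronglyMeasurable
  · exact (tt_integrable hK.id_mul hf' t).aestronglyMeasurable
  · refine Eventually.of_forall fun u s hs => ?_
    rw [norm_mul, Real.norm_eq_abs (u * K u)]
    by_cases hu : K u = 0
    · simp [hu]
    · refine mul_le_mul_of_nonneg_right (hB _ ?_) (abs_nonneg _)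
      have h1 := hR u hu
      have h2 : |s| ≤ |t| + 1 := by
        rw [Metric.mem_ball, Real.dist_eq] at hs
        have := abs_add_le t (s - t)
        simp at this
        linarith
      have h3 : |s * u| ≤ (|t|+1)*R := by
        rw [abs_mul]
        exact mul_le_mul h2 h1 (abs_nonneg _) (by positivity)
      exact abs_le.1 h3
  · exact (hK.id_mul.integrable.abs).const_mul B
  · refine Eventually.of_forall fun u s _ => ?_
    have h1 : HasDerivAt (fun s => s * u) u s := by simpa using (hasDerivAt_id s).mul_const u
    have h2 := ((hf (s * u)).comp s h1).mul_const (K u)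
    simpa [mul_assoc] using h2

theorem tt_parts {K f f' : ℝ → ℝ} (hK : IsTest K) (hf : ∀ y, HasDerivAt f (f' y) y)
    (hf' : Continuous f') {t : ℝ} (ht : t ≠ 0) :
    TT K f' t = -(1 / t) * TT (deriv K) f t := by
  have hfc : Continuous f := continuous_iff_continuousAt.2 fun s => (hf s).continuousAt
  have h := integral_mul_deriv_eq_deriv_mul_of_integrable (u := fun u => f (t * u))
    (u' := fun u => f' (t * u) * t) (v := K) (v' := deriv K)
    (fun x _ => by
      have h1 : HasDerivAt (fun s => t * s) t x := by simpa using (hasDerivAt_id x).const_mul t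
      exact (hf (t * x)).comp x h1)
    (fun x _ => hK.hasDeriv x)
    (tt_integrable hK.deriv hfc t)
    (by
      have := (tt_integrable hK hf' t).const_mul t
      refine this.congr (Eventually.of_forall fun u => ?_)
      simp only [Pi.mul_apply]; ring)
    (tt_integrable hK hfc t)
  have h2 : ∫ u, f' (t * u) * t * K u = t * TT K f' t := by
    rw [TT, ← integral_const_mul]
    refine integral_congr_ae (Eventually.of_forall fun u => ?_)
    simp only; ring
  rw [h2] at h
  simp only [TT] at h ⊢
  rw [h]; field_simp

theorem tt_hasDerivAt' {K f : ℝ → ℝ} (hK : IsTest K) (hf : Continuous f) {t : ℝ} (ht : t ≠ 0) :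
    HasDerivAt (TT K f) (-(1 / t) * TT (deriv (fun u => u * K u)) f t) t := by
  set P : ℝ → ℝ := fun t => ∫ z in (0 : ℝ)..t, f z with hP
  have hPd : ∀ t, HasDerivAt P (f t) t := fun t =>
    intervalIntegral.integral_hasDerivAt_right (hf.intervalIntegrable _ _)
      (hf.stronglyMeasurableAtFilter _ _) hf.continuousAt
  have h1 := tt_hasDerivAt hK.deriv hPd hf t
  have h2 : HasDerivAt (fun t : ℝ => -(1 / t)) (1 / t ^ 2) t := by
    have := (hasDerivAt_inv ht).fun_neg
    simpa using this
  have h3 := h2.mul h1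
  have h4 : TT K f =ᶠ[𝓝 t] ((fun t : ℝ => -(1 / t)) * TT (deriv K) P) := by
    filter_upwards [isOpen_ne.mem_nhds ht] with s hs
    exact tt_parts hK hPd hf hs
  refine (h3.congr_of_eventuallyEq h4).congr_deriv ?_
  have h5 : TT (deriv K) P t = - t * TT K f t := by
    rw [tt_parts hK hPd hf ht]; field_simp
  have h6 : TT (deriv (fun u => u * K u)) f t = TT K f t + TT (fun u => u * deriv K u) f t := by
    simp only [TT]
    rw [← integral_add (tt_integrable hK hf t) (tt_integrable hK.deriv.id_mul hf t)]
    refine integral_congr_ae (Eventually.of_forall fun u => ?_)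
    have : HasDerivAt (fun u => u * K u) (1 * K u + u * deriv K u) u :=
      (hasDerivAt_id u).mul (hK.hasDeriv u)
    simp only [this.deriv]; ring
  rw [h5, h6]; field_simp; ring

theorem tt_le_sup {K f : ℝ → ℝ} (hK : IsTest K) {B : ℝ} (hf : ∀ y, |f y| ≤ B) (t : ℝ) :
    |TT K f t| ≤ (∫ u, |K u|) * B := by
  rw [TT, mul_comm, ← integral_const_mul, ← Real.norm_eq_abs]
  refine norm_integral_le_of_norm_le (hK.integrable.abs.const_mul B)
    (Eventually.of_forall fun u => ?_)
  rw [norm_mul]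
  exact mul_le_mul_of_nonneg_right (hf _) (abs_nonneg _)

theorem tt_le_int {K f : ℝ → ℝ} {S : ℝ} (hS : ∀ u, |K u| ≤ S) (hf : Integrable f) {t : ℝ}
    (ht : t ≠ 0) : |TT K f t| ≤ S * |t|⁻¹ * ∫ y, |f y| := by
  have h1 : ∫ u, S * |f (t * u)| = S * |t|⁻¹ * ∫ y, |f y| := by
    rw [integral_const_mul, Measure.integral_comp_mul_left (fun y => |f y|) t, abs_inv]
    simp [mul_assoc]
  rw [TT, ← h1, ← Real.norm_eq_abs]
  refine norm_integral_le_of_norm_le ((hf.comp_mul_left' ht).abs.const_mul S)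
    (Eventually.of_forall fun u => ?_)
  rw [norm_mul, mul_comm]
  exact mul_le_mul_of_nonneg_right (hS _) (abs_nonneg _)

theorem hasDerivAt_iter {f : ℝ → ℝ} {k : ℕ} (hf : ContDiff ℝ (k + 1 : ℕ) f) (y : ℝ) :
    HasDerivAt (iteratedDeriv k f) (iteratedDeriv (k+1) f y) y := by
  rw [iteratedDeriv_succ]
  exact (hf.differentiable_iteratedDeriv k (by exact_mod_cast Nat.lt_succ_self k) y).hasDerivAt

theorem tt_decay (k : ℕ) : ∀ K : ℝ → ℝ, IsTest K → ∃ C, 0 ≤ C ∧ ∀ f : ℝ → ℝ, ContDiff ℝ k f →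
    Integrable f → ∀ t : ℝ, t ≠ 0 →
      |TT K (iteratedDeriv k f) t| ≤ C * (|t|⁻¹) ^ (k + 1) * ∫ y, |f y| := by
  induction k with
  | zero =>
    intro K hK
    obtain ⟨S, hS0, hS⟩ := hK.bdd
    refine ⟨S, hS0, fun f _ hfi t ht => ?_⟩
    simpa using tt_le_int hS hfi ht
  | succ k ih =>
    intro K hK
    obtain ⟨C, hC0, hC⟩ := ih _ hK.deriv
    refine ⟨C, hC0, fun f hf hfi t ht => ?_⟩
    rw [tt_parts hK (hasDerivAt_iter hf) (hf.continuous_iteratedDeriv (k+1) le_rfl) ht, abs_mul,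
      abs_neg, abs_div, abs_one, one_div]
    have := hC f (hf.of_le (by exact_mod_cast Nat.le_succ k)) hfi t ht
    calc |t|⁻¹ * _ ≤ |t|⁻¹ * (C * (|t|⁻¹) ^ (k + 1) * ∫ y, |f y|) :=
          mul_le_mul_of_nonneg_left this (by positivity)
      _ = _ := by ring

theorem wZero_eq (x : ℝ) : wZero x = expNegInvGlue (1 - x ^ 2) := by
  unfold wZero expNegInvGlue
  by_cases h : |x| < 1
  · have h2 : x ^ 2 < 1 := (sq_lt_one_iff_abs_lt_one x).2 h
    rw [if_pos h, if_neg (by linarith), one_div, ← inv_neg]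
    congr 2; ring
  · have h2 : ¬ x ^ 2 < 1 := fun h' => h ((sq_lt_one_iff_abs_lt_one x).1 h')
    rw [if_neg h, if_pos (by linarith)]

theorem wZero_contDiff : ContDiff ℝ ((⊤ : ℕ∞) : WithTop ℕ∞) wZero := by
  have : wZero = fun x => expNegInvGlue (1 - x ^ 2) := funext wZero_eq
  rw [this]
  exact expNegInvGlue.contDiff.comp (contDiff_const.sub (contDiff_id.pow 2))

theorem wZero_nonneg (x : ℝ) : 0 ≤ wZero x := by
  rw [wZero_eq]; exact expNegInvGlue.nonneg _

theorem wZero_zero {x : ℝ} (h : 1 ≤ |x|) : wZero x = 0 := by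
  rw [wZero, if_neg (not_lt.2 h)]

theorem wZero_test : IsTest wZero := by
  refine ⟨wZero_contDiff, HasCompactSupport.intro (isCompact_Icc (a := (-1 : ℝ)) (b := 1)) ?_⟩
  intro x hx
  apply wZero_zero
  by_contra h
  exact hx (abs_le.1 (not_le.1 h).le)

theorem cZero_pos : 0 < cZero := by
  refine integral_pos_of_integrable_nonneg_nonzero (x := 0) wZero_contDiff.continuous
    wZero_test.integrable (fun x => wZero_nonneg x) ?_
  rw [wZero_eq]
  exact (expNegInvGlue.pos_of_pos (by norm_num)).ne'

theorem omega_contDiff : ContDiff ℝ ((⊤ : ℕ∞) : WithTop ℕ∞) omegaFun := by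
  unfold omegaFun
  exact contDiff_const.mul (wZero_contDiff.comp ((contDiff_const.mul contDiff_id).sub contDiff_const))

theorem omega_nonneg (x : ℝ) : 0 ≤ omegaFun x :=
  mul_nonneg (div_nonneg (by norm_num) cZero_pos.le) (wZero_nonneg _)

theorem omega_zero_left {x : ℝ} (h : x ≤ 1 / 2) : omegaFun x = 0 := by
  rw [omegaFun, wZero_zero, mul_zero]
  rw [abs_of_nonpos (by linarith)]; linarith

theorem omega_zero_right {x : ℝ} (h : 1 ≤ x) : omegaFun x = 0 := by
  rw [omegaFun, wZero_zero, mul_zero]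
  rw [abs_of_nonneg (by linarith)]; linarith

theorem omega_test : IsTest omegaFun := by
  refine ⟨omega_contDiff, HasCompactSupport.intro (isCompact_Icc (a := (0 : ℝ)) (b := 1)) ?_⟩
  intro x hx
  by_cases h : 1 ≤ x
  · exact omega_zero_right h
  · apply omega_zero_left
    by_contra h'
    exact hx ⟨by linarith, by linarith⟩

theorem omega_integral : ∫ x, omegaFun x = 1 := by
  unfold omegaFun
  rw [integral_const_mul]
  have h1 : ∫ x : ℝ, wZero (4 * x - 3) = (1 / 4) * cZero := by
    rw [Measure.integral_comp_mul_left (fun y => wZero (y - 3)) 4, integral_sub_right_eq_self wZero 3,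
      cZero]
    norm_num [abs_of_pos]
  rw [h1]
  have := cZero_pos.ne'
  field_simp

/-- even extension of omega -/
def K0 (u : ℝ) : ℝ := omegaFun |u|

theorem K0_eq (u : ℝ) : K0 u = omegaFun u + omegaFun (-u) := by
  unfold K0
  rcases le_total 0 u with h | h
  · rw [abs_of_nonneg h, omega_zero_left (x := -u) (by linarith), add_zero]
  · rw [abs_of_nonpos h, omega_zero_left (x := u) (by linarith), zero_add]

theorem IsTest.comp_neg {K : ℝ → ℝ} (h : IsTest K) : IsTest (fun u => K (-u)) :=
  ⟨h.1.comp contDiff_neg, h.2.comp_homeomorph (Homeomorph.neg ℝ)⟩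

theorem IsTest.add {K L : ℝ → ℝ} (h : IsTest K) (h' : IsTest L) : IsTest (fun u => K u + L u) :=
  ⟨h.1.add h'.1, h.2.add h'.2⟩

theorem K0_test : IsTest K0 := by
  have : K0 = fun u => omegaFun u + omegaFun (-u) := funext K0_eq
  rw [this]
  exact omega_test.add omega_test.comp_neg

theorem K0_integral : ∫ u, K0 u = 2 := by
  simp_rw [K0_eq]
  rw [integral_add omega_test.integrable omega_test.comp_neg.integrable,
    integral_neg_eq_self (fun u => omegaFun u), omega_integral]
  norm_num

theorem K0_nonneg (u : ℝ) : 0 ≤ K0 u := omega_nonneg _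

theorem K0_neg (u : ℝ) : K0 (-u) = K0 u := by rw [K0, K0, abs_neg]

/-- the kernel of the constant term -/
def phi0 (u : ℝ) : ℝ := K0 u / |u|

theorem phi0_test : IsTest phi0 := by
  have h : IsTest (fun u => omegaFun u / u) := by
    refine ⟨contDiff_iff_contDiffAt.2 fun u => ?_, ?_⟩
    · by_cases hu : u = 0
      · subst hu
        have : (fun u => omegaFun u / u) =ᶠ[𝓝 0] fun _ => 0 := by
          filter_upwards [Iio_mem_nhds (show (0 : ℝ) < 1 / 2 by norm_num)] with v hv
          rw [omega_zero_left (le_of_lt hv), zero_div]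
        exact contDiffAt_const.congr_of_eventuallyEq this
      · exact omega_contDiff.contDiffAt.div contDiffAt_id hu
    · have := omega_test.2.mul_right (f' := fun u : ℝ => u⁻¹)
      exact this
  have h2 : phi0 = fun u => omegaFun u / u + omegaFun (-u) / (-u) := by
    funext u
    unfold phi0 K0
    rcases le_total 0 u with h | h
    · rw [abs_of_nonneg h, omega_zero_left (x := -u) (by linarith), zero_div, add_zero]
    · rw [abs_of_nonpos h, omega_zero_left (x := u) (by linarith), zero_div, zero_add]
  rw [h2]
  exact h.add h.comp_neg

theorem phi0_neg (u : ℝ) : phi0 (-u) = phi0 u := by rw [phi0, phi0, K0_neg, abs_neg]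

theorem tt_K0_neg (f : ℝ → ℝ) (t : ℝ) : TT K0 f (-t) = TT K0 f t := by
  unfold TT
  rw [← integral_neg_eq_self (fun u => f (t * u) * K0 u)]
  simp only [K0_neg, neg_mul, mul_neg]

theorem tt_K0_zero (f : ℝ → ℝ) : TT K0 f 0 = 2 * f 0 := by
  unfold TT
  simp only [zero_mul]
  rw [integral_const_mul, K0_integral]; ring

/-- Fubini: integral of the dilation average -/
theorem tt_fubini {f : ℝ → ℝ} (hf : Continuous f) (hfi : Integrable f) :
    Integrable (TT K0 f) ∧ ∫ t, TT K0 f t = (∫ u, phi0 u) * ∫ y, f y := by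
  have hK := K0_test.1.continuous
  have hInteg : Integrable (fun p : ℝ × ℝ => f (p.1 * p.2) * K0 p.2) (volume.prod volume) := by
    rw [integrable_prod_iff' (by
      apply Continuous.aestronglyMeasurable
      fun_prop)]
    constructor
    · refine Eventually.of_forall fun u => ?_
      by_cases hu : u = 0
      · subst hu
        simp [K0, omega_zero_left]
      · exact (hfi.comp_mul_right' hu).mul_const (K0 u)
    · have : (fun u => ∫ t, ‖f (t * u) * K0 u‖) = fun u => (∫ y, |f y|) * phi0 u := by
        funext u
        simp_rw [norm_mul, Real.norm_eq_abs]
        rw [integral_mul_const, Measure.integral_comp_mul_right (fun y => |f y|) u, abs_inv,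
          abs_of_nonneg (K0_nonneg u), phi0, smul_eq_mul]
        ring
      simp only [this]
      exact phi0_test.integrable.const_mul _
  refine ⟨hInteg.integral_prod_left, ?_⟩
  have h1 := integral_integral_swap (f := fun t u => f (t * u) * K0 u) hInteg
  unfold TT
  rw [h1, ← integral_mul_const]
  refine integral_congr_ae (Eventually.of_forall fun u => ?_)
  simp only
  rw [integral_mul_const, Measure.integral_comp_mul_right f u, abs_inv, phi0, smul_eq_mul]
  ring

/-- one term of the second part of h -/
def bj (x : ℝ) (j : ℕ) (y : ℝ) : ℝ := 1 / (x * ((j : ℝ) + 1)) * omegaFun (|y| / (x * ((j : ℝ) + 1)))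

theorem bj_nonneg {x : ℝ} (hx : 0 < x) (j : ℕ) (y : ℝ) : 0 ≤ bj x j y :=
  mul_nonneg (by positivity) (omega_nonneg _)

theorem bj_finite {x : ℝ} (hx : 0 < x) {S : ℝ} (hS0 : 0 ≤ S) (hS : ∀ u, |omegaFun u| ≤ S) (y : ℝ) :
    Summable (fun j => bj x j y) ∧ ∑' j, bj x j y ≤ 4 * S / x := by
  set a : ℝ := |y| / x with ha
  have hkey : ∀ j : ℕ, bj x j y ≠ 0 → a < j + 1 ∧ (j : ℝ) + 1 < 2 * a := by
    intro j hj
    have hpos : 0 < x * ((j : ℝ) + 1) := by positivity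
    have h0 : omegaFun (|y| / (x * ((j : ℝ) + 1))) ≠ 0 := fun h => hj (by rw [bj, h, mul_zero])
    have h1 : ¬ (|y| / (x * ((j : ℝ) + 1)) ≤ 1 / 2) := fun h => h0 (omega_zero_left h)
    have h2 : ¬ (1 ≤ |y| / (x * ((j : ℝ) + 1))) := fun h => h0 (omega_zero_right h)
    rw [not_le, lt_div_iff₀ hpos] at h1
    rw [not_le, div_lt_one hpos] at h2
    constructor
    · rw [ha, div_lt_iff₀ hx]; linarith
    · rw [ha, ← mul_div_assoc, lt_div_iff₀ hx]; linarith
  have hz : ∀ j ∉ Finset.range ⌈2 * a⌉₊, bj x j y = 0 := by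
    intro j hj
    by_contra h
    have := (hkey j h).2
    apply hj
    rw [Finset.mem_range]
    have h3 := Nat.le_ceil (2 * a)
    have : (j : ℝ) < ⌈2 * a⌉₊ := by linarith
    exact_mod_cast this
  refine ⟨summable_of_ne_finset_zero hz, ?_⟩
  rw [tsum_eq_sum hz]
  by_cases hex : ∃ j, bj x j y ≠ 0
  · obtain ⟨j0, hj0⟩ := hex
    have ha2 : 1 < 2 * a := by
      have := (hkey j0 hj0).2
      have h : (0 : ℝ) ≤ j0 := by positivity
      linarith
    have hapos : 0 < a := by linarith
    have hterm : ∀ j ∈ Finset.range ⌈2 * a⌉₊, bj x j y ≤ S / (x * a) := by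
      intro j _
      by_cases h : bj x j y = 0
      · rw [h]; positivity
      · have h1 := (hkey j h).1
        rw [bj, div_mul_eq_mul_div, one_mul]
        exact div_le_div₀ hS0 ((le_abs_self _).trans (hS _)) (by positivity)
          (mul_le_mul_of_nonneg_left h1.le hx.le)
    refine (Finset.sum_le_card_nsmul _ _ _ hterm).trans ?_
    rw [Finset.card_range, nsmul_eq_mul]
    have h4 : (⌈2 * a⌉₊ : ℝ) ≤ 4 * a := by
      have := Nat.ceil_lt_add_one (show 0 ≤ 2 * a by linarith)
      linarith
    calc (⌈2 * a⌉₊ : ℝ) * (S / (x * a)) ≤ 4 * a * (S / (x * a)) :=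
          mul_le_mul_of_nonneg_right h4 (by positivity)
      _ = 4 * S / x := by field_simp
  · push Not at hex
    rw [Finset.sum_eq_zero (fun j _ => hex j)]
    positivity

theorem phi_term {x : ℝ} (hx : 0 < x) (j : ℕ) :
    1 / (x * ((j : ℝ) + 1)) * omegaFun (x * ((j : ℝ) + 1)) = phi0 (x * ((j : ℝ) + 1)) := by
  have hpos : 0 < x * ((j : ℝ) + 1) := by positivity
  rw [phi0, K0, abs_of_pos hpos]; ring

theorem phi_summable {x : ℝ} (hx : 0 < x) : Summable fun j : ℕ => phi0 (x * ((j : ℝ) + 1)) := by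
  refine summable_of_ne_finset_zero (s := Finset.range ⌈1 / x⌉₊) fun j hj => ?_
  rw [← phi_term hx, omega_zero_right, mul_zero]
  rw [Finset.mem_range, not_lt] at hj
  have h1 := Nat.le_ceil (1 / x)
  have h2 : (⌈1 / x⌉₊ : ℝ) ≤ j := by exact_mod_cast hj
  have h3 : 1 / x ≤ (j : ℝ) + 1 := by linarith
  rw [div_le_iff₀ hx] at h3
  linarith

theorem bj_integral {x : ℝ} (hx : 0 < x) (f : ℝ → ℝ) (j : ℕ) :
    ∫ y, f y * bj x j y = TT K0 f (x * ((j : ℝ) + 1)) := by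
  have hpos : 0 < x * ((j : ℝ) + 1) := by positivity
  set t := x * ((j : ℝ) + 1) with ht
  have h := Measure.integral_comp_mul_left (fun y => f y * bj x j y) t
  have h2 : ∫ u, f (t * u) * bj x j (t * u) = t⁻¹ * TT K0 f t := by
    rw [TT, ← integral_const_mul]
    refine integral_congr_ae (Eventually.of_forall fun u => ?_)
    simp only [bj, ← ht, K0]
    rw [abs_mul, abs_of_pos hpos, mul_div_cancel_left₀ _ hpos.ne']
    ring
  rw [h2, abs_inv, abs_of_pos hpos, smul_eq_mul] at h
  exact (mul_left_cancel₀ (inv_ne_zero hpos.ne') h).symm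

theorem h_sum {f : ℝ → ℝ} (hfi : Integrable f) {x : ℝ} (hx : 0 < x) :
    HasSum (fun j : ℕ => TT K0 f (x * ((j : ℝ) + 1)) - (∫ y, f y) * phi0 (x * ((j : ℝ) + 1)))
      (-(∫ y, f y * hFun x y)) := by
  obtain ⟨S, hS0, hS⟩ := omega_test.bdd
  have hb := bj_finite hx hS0 hS
  have hbm : ∀ j, Measurable (bj x j) := by
    intro j
    unfold bj
    have := omega_contDiff.continuous.measurable
    fun_prop
  have hBm : Measurable (fun y => ∑' j, bj x j y) := by
    exact Measurable.tsum hbm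
  have hBn : ∀ y, ‖∑' j, bj x j y‖ ≤ 4 * S / x := by
    intro y
    rw [Real.norm_eq_abs, abs_of_nonneg (tsum_nonneg fun j => bj_nonneg hx j y)]
    exact (hb y).2
  have hh : ∀ y, hFun x y = (∑' j : ℕ, phi0 (x * ((j : ℝ) + 1))) - ∑' j, bj x j y := by
    intro y
    rw [← (phi_summable hx).tsum_sub (hb y).1, hFun]
    refine tsum_congr fun j => ?_
    rw [mul_sub, phi_term hx, bj]
  have hfB : Integrable (fun y => f y * ∑' j, bj x j y) :=
    hfi.mul_bdd (c := 4 * S / x) hBm.aestronglyMeasurable (Eventually.of_forall hBn)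
  have hI : ∫ y, f y * hFun x y
      = (∫ y, f y) * (∑' j : ℕ, phi0 (x * ((j : ℝ) + 1))) - ∫ y, f y * ∑' j, bj x j y := by
    simp_rw [hh, mul_sub]
    rw [integral_sub (hfi.mul_const _) hfB, integral_mul_const]
  have h1 : HasSum (fun j => ∫ y, f y * bj x j y) (∫ y, f y * ∑' j, bj x j y) := by
    refine hasSum_integral_of_dominated_convergence (fun j y => |f y| * bj x j y) ?_ ?_ ?_ ?_ ?_
    · intro j
      exact hfi.aestronglyMeasurable.mul (hbm j).aestronglyMeasurable
    · intro j
      refine Eventually.of_forall fun y => ?_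
      rw [norm_mul, Real.norm_eq_abs, Real.norm_eq_abs, abs_of_nonneg (bj_nonneg hx j y)]
    · exact Eventually.of_forall fun y => (hb y).1.mul_left _
    · simp_rw [tsum_mul_left]
      exact hfi.abs.mul_bdd (c := 4 * S / x) hBm.aestronglyMeasurable (Eventually.of_forall hBn)
    · exact Eventually.of_forall fun y => (hb y).1.hasSum.mul_left _
  simp_rw [bj_integral hx] at h1
  have h2 := h1.sub ((phi_summable hx).hasSum.mul_left (∫ y, f y))
  rw [hI, neg_sub]
  exact h2

theorem abs_iter_le {M : ℕ} {f : ℝ → ℝ} (hf : MemC1 M 0 f) {k : ℕ} (hk : k ≤ M) (y : ℝ) :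
    |iteratedDeriv k f y| ≤ wNorm1 M 0 f :=
  le_csSup hf.2 ⟨k, y, hk, by simp⟩

theorem test_decay {K : ℝ → ℝ} (hK : IsTest K) : ∃ C, 0 ≤ C ∧ ∀ t, |K t| ≤ C ∧
    (t ≠ 0 → |K t| ≤ C * |t|⁻¹) ∧ (t ≠ 0 → |K t| ≤ C * (|t|⁻¹) ^ 2) := by
  obtain ⟨A, hA0, hA⟩ := hK.bdd
  obtain ⟨B, hB0, hB⟩ := (hK.pow_mul 1).bdd
  obtain ⟨D, hD0, hD⟩ := (hK.pow_mul 2).bdd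
  refine ⟨A + B + D, by positivity, fun t => ⟨by linarith [hA t], fun ht => ?_, fun ht => ?_⟩⟩
  · have h1 := hB t
    have h2 : 0 < |t| := abs_pos.2 ht
    rw [pow_one, abs_mul] at h1
    rw [← div_eq_mul_inv, le_div_iff₀ h2]
    linarith
  · have h1 := hD t
    have h2 : 0 < |t| := abs_pos.2 ht
    rw [abs_mul, abs_pow] at h1
    rw [inv_pow, ← div_eq_mul_inv, le_div_iff₀ (by positivity)]
    linarith

/-- the derivatives of the function to be summed -/
def Gd (f : ℝ → ℝ) (k : ℕ) (t : ℝ) : ℝ :=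
  TT (fun u => u ^ k * K0 u) (iteratedDeriv k f) t - (∫ y, f y) * iteratedDeriv k phi0 t

/-- the derivative of order M+1 away from zero -/
def Gl (f : ℝ → ℝ) (M : ℕ) (t : ℝ) : ℝ :=
  -(1 / t) * TT (deriv (fun u => u * (u ^ M * K0 u))) (iteratedDeriv M f) t
    - (∫ y, f y) * iteratedDeriv (M + 1) phi0 t

theorem phi0_hasDeriv (k : ℕ) (t : ℝ) :
    HasDerivAt (iteratedDeriv k phi0) (iteratedDeriv (k+1) phi0 t) t :=
  hasDerivAt_iter (phi0_test.1.of_le (by exact_mod_cast le_top)) t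

theorem Gd_hasDeriv {M : ℕ} {f : ℝ → ℝ} (hf : ContDiff ℝ M f) {k : ℕ} (hk : k < M) (t : ℝ) :
    HasDerivAt (Gd f k) (Gd f (k+1) t) t := by
  have hf' : ContDiff ℝ (k+1 : ℕ) f := hf.of_le (by exact_mod_cast hk)
  have h1 := tt_hasDerivAt (K0_test.pow_mul k) (hasDerivAt_iter hf')
    (hf'.continuous_iteratedDeriv (k+1) le_rfl) t
  have h2 : (fun u => u * (u ^ k * K0 u)) = fun u => u ^ (k+1) * K0 u := by
    funext u; ring
  rw [h2] at h1
  exact h1.sub ((phi0_hasDeriv k t).const_mul _)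

theorem Gl_hasDeriv {M : ℕ} {f : ℝ → ℝ} (hf : ContDiff ℝ M f) {t : ℝ} (ht : t ≠ 0) :
    HasDerivAt (Gd f M) (Gl f M t) t :=
  (tt_hasDerivAt' (K0_test.pow_mul M) (hf.continuous_iteratedDeriv M le_rfl) ht).sub
    ((phi0_hasDeriv M t).const_mul _)

theorem abs_int_le (f : ℝ → ℝ) : |∫ y, f y| ≤ ∫ y, |f y| := by
  exact abs_integral_le_integral_abs

theorem N_nonneg {M : ℕ} {f : ℝ → ℝ} (hf : MemC1 M 0 f) : 0 ≤ wNorm1 M 0 f ∧ 0 ≤ ∫ y, |f y| :=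
  ⟨(abs_nonneg _).trans (abs_iter_le hf (Nat.zero_le M) 0), integral_nonneg fun _ => abs_nonneg _⟩

theorem Gd_bound (M k : ℕ) (hk1 : 1 ≤ k) (hk : k ≤ M) : ∃ C, 0 ≤ C ∧ ∀ f : ℝ → ℝ, MemC1 M 0 f →
    Integrable f → ∀ t, |Gd f k t| ≤ C * (wNorm1 M 0 f + ∫ y, |f y|) ∧
      (1 ≤ |t| → |Gd f k t| ≤ C * (wNorm1 M 0 f + ∫ y, |f y|) * (|t|⁻¹) ^ 2) := by
  obtain ⟨A, hA0, hA⟩ := test_decay (phi0_test.iter k)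
  obtain ⟨B, hB0, hB⟩ := tt_decay k _ (K0_test.pow_mul k)
  set D := ∫ u, |u ^ k * K0 u| with hD
  have hD0 : 0 ≤ D := integral_nonneg fun _ => abs_nonneg _
  refine ⟨A + B + D, by positivity, fun f hf hfi t => ?_⟩
  obtain ⟨hN1, hN2⟩ := N_nonneg hf
  have hfk : ContDiff ℝ k f := hf.1.of_le (by exact_mod_cast hk)
  set W := wNorm1 M 0 f
  set J := ∫ y, |f y|
  have htri : |Gd f k t| ≤ |TT (fun u => u ^ k * K0 u) (iteratedDeriv k f) t|
      + J * |iteratedDeriv k phi0 t| := by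
    refine (abs_sub _ _).trans (add_le_add le_rfl ?_)
    rw [abs_mul]
    exact mul_le_mul_of_nonneg_right (abs_int_le f) (abs_nonneg _)
  constructor
  · have h1 := tt_le_sup (K0_test.pow_mul k) (abs_iter_le hf hk) t
    have h2 := mul_le_mul_of_nonneg_left (hA t).1 hN2
    have : D * W + J * A ≤ (A + B + D) * (W + J) := by nlinarith [mul_nonneg hA0 hN1, mul_nonneg hB0 hN1, mul_nonneg hB0 hN2, mul_nonneg hD0 hN2]
    linarith
  · intro ht
    have ht0 : t ≠ 0 := by rintro rfl; norm_num at ht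
    have h1 := hB f hfk hfi t ht0
    have h2 := mul_le_mul_of_nonneg_left ((hA t).2.2 ht0) hN2
    have h3 : (|t|⁻¹) ^ (k+1) ≤ (|t|⁻¹) ^ 2 :=
      pow_le_pow_of_le_one (by positivity) (inv_le_one_of_one_le₀ ht) (by omega)
    have h4 : B * |t|⁻¹ ^ (k+1) * J ≤ B * |t|⁻¹ ^ 2 * J := by gcongr
    set r := |t|⁻¹ ^ 2
    have hr : 0 ≤ r := by positivity
    have h5 : B * r * J + J * (A * r) ≤ (A + B + D) * (W + J) * r := by
      have : B * J + J * A ≤ (A + B + D) * (W + J) := by nlinarith [mul_nonneg hA0 hN1, mul_nonneg hB0 hN1, mul_nonneg hD0 hN1, mul_nonneg hD0 hN2]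
      nlinarith
    linarith

theorem Gl_bound (M : ℕ) : ∃ C, 0 ≤ C ∧ ∀ f : ℝ → ℝ, MemC1 M 0 f →
    Integrable f → ∀ t, t ≠ 0 → |Gl f M t| ≤ C * (wNorm1 M 0 f + ∫ y, |f y|) * |t|⁻¹ ∧
      (1 ≤ |t| → |Gl f M t| ≤ C * (wNorm1 M 0 f + ∫ y, |f y|) * (|t|⁻¹) ^ 2) := by
  obtain ⟨A, hA0, hA⟩ := test_decay (phi0_test.iter (M+1))
  have hL := (K0_test.pow_mul M).id_mul.deriv
  obtain ⟨B, hB0, hB⟩ := tt_decay M _ hL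
  set D := ∫ v, |(deriv (fun u => u * (u ^ M * K0 u))) v| with hD
  have hD0 : 0 ≤ D := integral_nonneg fun _ => abs_nonneg _
  refine ⟨A + B + D, by positivity, fun f hf hfi t ht0 => ?_⟩
  obtain ⟨hN1, hN2⟩ := N_nonneg hf
  set W := wNorm1 M 0 f
  set J := ∫ y, |f y|
  have htri : |Gl f M t| ≤ |t|⁻¹ * |TT (deriv (fun u => u * (u ^ M * K0 u))) (iteratedDeriv M f) t|
      + J * |iteratedDeriv (M+1) phi0 t| := by
    refine (abs_sub _ _).trans (add_le_add (le_of_eq ?_) ?_)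
    · rw [abs_mul, abs_neg, abs_div, abs_one, one_div]
    rw [abs_mul]
    exact mul_le_mul_of_nonneg_right (abs_int_le f) (abs_nonneg _)
  have hr0 : 0 ≤ |t|⁻¹ := by positivity
  constructor
  · have h1 := mul_le_mul_of_nonneg_left (tt_le_sup hL (abs_iter_le hf le_rfl) t) hr0
    have h2 := mul_le_mul_of_nonneg_left ((hA t).2.1 ht0) hN2
    have : D * W + J * A ≤ (A + B + D) * (W + J) := by nlinarith [mul_nonneg hA0 hN1, mul_nonneg hB0 hN1, mul_nonneg hB0 hN2, mul_nonneg hD0 hN2]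
    have h5 := mul_le_mul_of_nonneg_right this hr0
    rw [← hD] at h1
    nlinarith
  · intro ht
    have h1 := mul_le_mul_of_nonneg_left (hB f hf.1 hfi t ht0) hr0
    have h2 := mul_le_mul_of_nonneg_left ((hA t).2.2 ht0) hN2
    have h3 : (|t|⁻¹) ^ (M+2) ≤ (|t|⁻¹) ^ 2 :=
      pow_le_pow_of_le_one (by positivity) (inv_le_one_of_one_le₀ ht) (by omega)
    have h4 : B * |t|⁻¹ ^ (M+2) * J ≤ B * |t|⁻¹ ^ 2 * J := by gcongr
    have h6 : |t|⁻¹ * (B * |t|⁻¹ ^ (M+1) * J) = B * |t|⁻¹ ^ (M+2) * J := by ring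
    rw [h6] at h1
    set r := |t|⁻¹ ^ 2
    have hr : 0 ≤ r := by positivity
    have h5 : B * r * J + J * (A * r) ≤ (A + B + D) * (W + J) * r := by
      have : B * J + J * A ≤ (A + B + D) * (W + J) := by nlinarith [mul_nonneg hA0 hN1, mul_nonneg hB0 hN1, mul_nonneg hD0 hN1, mul_nonneg hD0 hN2]
      nlinarith
    linarith

theorem interp_rpow {a A t δ : ℝ} (hA : 0 ≤ A) (ht : t ≠ 0) (hδ0 : 0 < δ) (hδ1 : δ < 1)
    (h1 : a ≤ A * |t|⁻¹) (h2 : 1 ≤ |t| → a ≤ A * (|t|⁻¹) ^ 2) : a ≤ A * |t| ^ (-(1 + δ)) := by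
  have htp : 0 < |t| := abs_pos.2 ht
  rcases le_total 1 |t| with h | h
  · refine (h2 h).trans (mul_le_mul_of_nonneg_left ?_ hA)
    rw [inv_pow, ← Real.rpow_natCast, ← Real.rpow_neg htp.le]
    exact Real.rpow_le_rpow_of_exponent_le h (by push_cast; linarith)
  · refine h1.trans (mul_le_mul_of_nonneg_left ?_ hA)
    rw [← Real.rpow_neg_one]
    exact Real.rpow_le_rpow_of_exponent_ge htp h (by linarith)

theorem interp_sq {a A t : ℝ} (hA : 0 ≤ A)
    (h1 : a ≤ A) (h2 : 1 ≤ |t| → a ≤ A * (|t|⁻¹) ^ 2) : a ≤ 2 * A / (1 + t ^ 2) := by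
  rw [le_div_iff₀ (by positivity)]
  rcases le_total 1 |t| with h | h
  · have h3 := h2 h
    have hs : 1 ≤ t ^ 2 := by rw [← sq_abs]; nlinarith
    rw [inv_pow, sq_abs, ← div_eq_mul_inv, le_div_iff₀ (by linarith)] at h3
    by_cases ha : 0 ≤ a
    · nlinarith
    · nlinarith
  · have hs : t ^ 2 ≤ 1 := by rw [← sq_abs]; nlinarith [abs_nonneg t]
    nlinarith [sq_nonneg t]

theorem Gd_bound_all (M : ℕ) : ∃ C, 0 ≤ C ∧ ∀ k, 1 ≤ k → k ≤ M → ∀ f : ℝ → ℝ, MemC1 M 0 f →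
    Integrable f → ∀ t, |Gd f k t| ≤ C * (wNorm1 M 0 f + ∫ y, |f y|) ∧
      (1 ≤ |t| → |Gd f k t| ≤ C * (wNorm1 M 0 f + ∫ y, |f y|) * (|t|⁻¹) ^ 2) := by
  have h : ∀ k, ∃ C, 0 ≤ C ∧ (1 ≤ k → k ≤ M → ∀ f : ℝ → ℝ, MemC1 M 0 f →
      Integrable f → ∀ t, |Gd f k t| ≤ C * (wNorm1 M 0 f + ∫ y, |f y|) ∧
      (1 ≤ |t| → |Gd f k t| ≤ C * (wNorm1 M 0 f + ∫ y, |f y|) * (|t|⁻¹) ^ 2)) := by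
    intro k
    by_cases hk : 1 ≤ k ∧ k ≤ M
    · obtain ⟨C, h0, h⟩ := Gd_bound M k hk.1 hk.2
      exact ⟨C, h0, fun _ _ => h⟩
    · exact ⟨0, le_rfl, fun h1 h2 => absurd ⟨h1, h2⟩ hk⟩
  choose C hC0 hC using h
  refine ⟨∑ k ∈ Finset.range (M+1), C k, Finset.sum_nonneg fun k _ => hC0 k, ?_⟩
  intro k h1 h2 f hf hfi t
  have hle : C k ≤ ∑ k ∈ Finset.range (M+1), C k :=
    Finset.single_le_sum (f := C) (fun k _ => hC0 k) (Finset.mem_range.2 (by omega))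
  obtain ⟨hN1, hN2⟩ := N_nonneg hf
  have h3 := mul_le_mul_of_nonneg_right hle (add_nonneg hN1 hN2)
  obtain ⟨h4, h5⟩ := hC k h1 h2 f hf hfi t
  exact ⟨h4.trans h3, fun ht => (h5 ht).trans (mul_le_mul_of_nonneg_right h3 (by positivity))⟩

theorem Gd_zero (f : ℝ → ℝ) (t : ℝ) : Gd f 0 t = TT K0 f t - (∫ y, f y) * phi0 t := by
  simp [Gd]

theorem Gd_hasSum {f : ℝ → ℝ} (hfi : Integrable f) {x : ℝ} (hx : 0 < x) :
    HasSum (fun n : ℤ => Gd f 0 (x * n)) (2 * f 0 - 2 * ∫ y, f y * hFun x y) := by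
  have h0 : Gd f 0 0 = 2 * f 0 := by
    rw [Gd_zero, tt_K0_zero, phi0]; simp
  have heven : ∀ t, Gd f 0 (-t) = Gd f 0 t := by
    intro t; rw [Gd_zero, Gd_zero, tt_K0_neg, phi0_neg]
  have h1 : HasSum (fun j : ℕ => Gd f 0 (x * ((j : ℝ) + 1))) (-(∫ y, f y * hFun x y)) := by
    simp_rw [Gd_zero]; exact h_sum hfi hx
  have h2 : HasSum (fun j : ℕ => Gd f 0 (x * (j : ℝ))) (2 * f 0 + -(∫ y, f y * hFun x y)) := by
    have := (hasSum_nat_add_iff (f := fun j : ℕ => Gd f 0 (x * (j : ℝ))) 1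
      (g := -(∫ y, f y * hFun x y))).1 (by simpa using h1)
    simp [h0] at this
    rw [add_comm]; simpa using this
  have h3 := HasSum.of_nat_of_neg_add_one (f := fun n : ℤ => Gd f 0 (x * n))
    (m := 2 * f 0 + -(∫ y, f y * hFun x y)) (m' := -(∫ y, f y * hFun x y))
    (by simpa using h2)
    (by
      convert! h1 using 2 with j
      rw [← heven]; push_cast; congr 1; ring)
  convert! h3 using 1
  ring

theorem half_abs_ge (n : ℤ) : (1 / 2 : ℝ) ≤ |(n : ℝ) + 1 / 2| := by
  rcases le_or_gt 0 n with h | h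
  · have : (0 : ℝ) ≤ n := by exact_mod_cast h
    rw [abs_of_nonneg (by linarith)]; linarith
  · have : (n : ℝ) ≤ -1 := by exact_mod_cast Int.le_sub_one_of_lt h
    rw [abs_of_nonpos (by linarith)]; linarith

theorem far_bound {n : ℤ} (h0 : n ≠ 0) (h1 : n ≠ -1) {s : ℝ} (hs : s ∈ Icc (0 : ℝ) 1) :
    2 / 3 * |(n : ℝ) + 1 / 2| ≤ |s + n| := by
  obtain ⟨hs0, hs1⟩ := hs
  rcases le_or_gt 0 n with h | h
  · have : (1 : ℝ) ≤ n := by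
      have : 1 ≤ n := by omega
      exact_mod_cast this
    rw [abs_of_nonneg (by linarith), abs_of_nonneg (by linarith)]; linarith
  · have : (n : ℝ) ≤ -2 := by
      have : n ≤ -2 := by omega
      exact_mod_cast this
    rw [abs_of_nonpos (by linarith), abs_of_nonpos (by linarith)]; linarith

theorem main_sum (M : ℕ) (hM : 1 ≤ M) (Cb : ℝ) (δ : ℝ) (hδ0 : 0 < δ) (hδ1 : δ < 1) :
    ∃ C : ℝ, ∀ f : ℝ → ℝ, MemC1 M 0 f → Integrable f →
      ∀ x : ℝ, 0 < x → x ≤ Cb →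
        |∑' n : ℤ, Gd f 0 (x * n)| ≤
          C * x ^ ((M : ℝ) - δ) * (wNorm1 M 0 f + ∫ y : ℝ, |f y|) := by
  obtain ⟨A, hA0, hA⟩ := Gd_bound_all M
  obtain ⟨B, hB0, hB⟩ := Gl_bound M
  have hZ : Summable fun n : ℤ => 1 / |(n : ℝ) + 1 / 2| ^ (1 + δ) :=
    (Real.summable_one_div_int_add_rpow (1 / 2) (1 + δ)).2 (by linarith)
  have hZ2 : Summable fun n : ℤ => 1 / |(n : ℝ) + 1 / 2| ^ (2 : ℝ) :=
    (Real.summable_one_div_int_add_rpow (1 / 2) 2).2 (by norm_num)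
  set C' : ℝ := 2 * A * Cb ^ δ + (3 / 2) ^ (1 + δ) * B with hC'
  refine ⟨C' * ∑' n : ℤ, 1 / |(n : ℝ) + 1 / 2| ^ (1 + δ), ?_⟩
  intro f hf hfi x hx hxC
  obtain ⟨hN1, hN2⟩ := N_nonneg hf
  have hfc : Continuous f := hf.1.continuous
  set N := wNorm1 M 0 f + ∫ y : ℝ, |f y| with hN
  have hN0 : 0 ≤ N := add_nonneg hN1 hN2
  have hCb : 0 < Cb := hx.trans_le hxC
  have hCb' : 0 < Cb ^ δ := Real.rpow_pos_of_pos hCb δ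
  have hAN : 0 ≤ A * N := mul_nonneg hA0 hN0
  have hBN : 0 ≤ B * N := mul_nonneg hB0 hN0
  have hxMpos : 0 < x ^ ((M : ℝ) - δ) := Real.rpow_pos_of_pos hx _
  set U : ℝ := (1 + x) ^ M * (2 * (A * N)) * (5 * (1 + (x ^ 2)⁻¹)) with hU
  have hlin : ∀ s : ℝ, HasDerivAt (fun s => x * s) x s := fun s => by
    simpa using (hasDerivAt_id s).const_mul x
  have key := em_bound M hM (fun k s => x ^ k * Gd f k (x * s)) ?_
    (fun n => U * (1 / |(n : ℝ) + 1 / 2| ^ (2 : ℝ))) (hZ2.mul_left U) ?_ ?_ ?_ ?_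
    (fun n => C' * x ^ ((M : ℝ) - δ) * N * (1 / |(n : ℝ) + 1 / 2| ^ (1 + δ))) (hZ.mul_left _) ?_
  · simp only [pow_zero, one_mul] at key
    rw [tsum_mul_left] at key
    calc _ ≤ _ := key
      _ = _ := by ring
  · intro k hk s
    have h1 := ((Gd_hasDeriv hf.1 hk (x * s)).comp s (hlin s)).const_mul (x ^ k)
    refine h1.congr_deriv ?_
    ring
  · intro k hk1 hk n s hs
    obtain ⟨h1, h2⟩ := hA k hk1 hk f hf hfi (x * (s + n))
    have h3 := interp_sq hAN h1 h2
    have hxk : x ^ k ≤ (1 + x) ^ M :=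
      (pow_le_pow_left₀ hx.le (by linarith) k).trans (pow_le_pow_right₀ (by linarith) hk)
    have hh := half_abs_ge n
    have h4 : 1 / (1 + (x * (s + n)) ^ 2) ≤
        (5 * (1 + (x ^ 2)⁻¹)) * (1 / |(n : ℝ) + 1 / 2| ^ (2 : ℝ)) := by
      rw [show (2 : ℝ) = ((2 : ℕ) : ℝ) by norm_num, Real.rpow_natCast, sq_abs]
      rw [mul_one_div, div_le_div_iff₀ (by positivity) (by rw [← sq_abs]; push_cast at hh ⊢; positivity)]
      set w := s + (n : ℝ) with hw
      have hn : (n : ℝ) + 1 / 2 = w - (s - 1 / 2) := by rw [hw]; ring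
      have h5 : ((n : ℝ) + 1 / 2) ^ 2 ≤ 5 * (1 + w ^ 2) := by
        rw [hn]
        have : (s - 1 / 2) ^ 2 ≤ 9 / 4 := by nlinarith [hs.1, hs.2]
        nlinarith [sq_nonneg (w + (s - 1 / 2)), sq_nonneg w]
      have h6 : 1 + w ^ 2 ≤ (1 + (x ^ 2)⁻¹) * (1 + (x * w) ^ 2) := by
        have : (1 + (x ^ 2)⁻¹) * (1 + (x * w) ^ 2) = 1 + w ^ 2 + (x ^ 2)⁻¹ + (x * w) ^ 2 := by
          field_simp; ring
        rw [this]
        have : 0 ≤ (x ^ 2)⁻¹ := by positivity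
        nlinarith [sq_nonneg (x * w)]
      norm_num at h5 ⊢
      nlinarith
    rw [abs_mul, abs_of_pos (pow_pos hx k)]
    calc x ^ k * |Gd f k (x * (s + n))| ≤ (1 + x) ^ M * (2 * (A * N) / (1 + (x * (s + n)) ^ 2)) :=
          mul_le_mul hxk h3 (abs_nonneg _) (by positivity)
      _ = (1 + x) ^ M * (2 * (A * N)) * (1 / (1 + (x * (s + n)) ^ 2)) := by ring
      _ ≤ (1 + x) ^ M * (2 * (A * N)) * ((5 * (1 + (x ^ 2)⁻¹)) * (1 / |(n : ℝ) + 1 / 2| ^ (2 : ℝ))) :=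
          mul_le_mul_of_nonneg_left h4 (by positivity)
      _ = _ := by rw [hU]; ring
  · simpa using (Gd_hasSum hfi hx).summable
  · simp only [pow_zero, one_mul]
    have h1 : Integrable (Gd f 0) := by
      have : Gd f 0 = fun t => TT K0 f t - (∫ y, f y) * phi0 t := funext (Gd_zero f)
      rw [this]
      exact (tt_fubini hfc hfi).1.sub (phi0_test.integrable.const_mul _)
    exact h1.comp_mul_left' hx.ne'
  · simp only [pow_zero, one_mul]
    rw [Measure.integral_comp_mul_left (Gd f 0) x]
    simp_rw [Gd_zero]
    rw [integral_sub (tt_fubini hfc hfi).1 (phi0_test.integrable.const_mul _),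
      (tt_fubini hfc hfi).2, integral_const_mul]
    simp [mul_comm]
  · intro n s hs s' hs'
    have hh := half_abs_ge n
    have hhp : 0 < |(n : ℝ) + 1 / 2| := by linarith
    have hxM : x ^ M = x ^ ((M : ℝ) - δ) * x ^ δ := by
      rw [← Real.rpow_add hx, sub_add_cancel, Real.rpow_natCast]
    rw [← mul_sub, abs_mul, abs_of_pos (pow_pos hx M)]
    by_cases hn : n = 0 ∨ n = -1
    · have h1 := (hA M hM le_rfl f hf hfi (x * (s + n))).1
      have h2 := (hA M hM le_rfl f hf hfi (x * (s' + n))).1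
      have h3 : |Gd f M (x * (s + n)) - Gd f M (x * (s' + n))| ≤ 2 * (A * N) := by
        have := abs_sub (Gd f M (x * (s + n))) (Gd f M (x * (s' + n)))
        linarith
      have h4 : x ^ M ≤ x ^ ((M : ℝ) - δ) * Cb ^ δ := by
        rw [hxM]
        exact mul_le_mul_of_nonneg_left (Real.rpow_le_rpow hx.le hxC hδ0.le) hxMpos.le
      have h5 : 1 ≤ 1 / |(n : ℝ) + 1 / 2| ^ (1 + δ) := by
        have h6 : |(n : ℝ) + 1 / 2| ≤ 1 := by
          rcases hn with rfl | rfl <;> norm_num [abs_le]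
        rw [le_div_iff₀ (Real.rpow_pos_of_pos hhp _), one_mul]
        exact Real.rpow_le_one hhp.le h6 (by linarith)
      calc x ^ M * _ ≤ (x ^ ((M : ℝ) - δ) * Cb ^ δ) * (2 * (A * N)) :=
            mul_le_mul h4 h3 (abs_nonneg _) (by positivity)
        _ = (2 * A * Cb ^ δ) * x ^ ((M : ℝ) - δ) * N * 1 := by ring
        _ ≤ C' * x ^ ((M : ℝ) - δ) * N * (1 / |(n : ℝ) + 1 / 2| ^ (1 + δ)) := by
            have hcc : 2 * A * Cb ^ δ ≤ C' := by
              rw [hC']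
              have : 0 ≤ (3 / 2 : ℝ) ^ (1 + δ) * B := by positivity
              linarith
            gcongr
    · push Not at hn
      have hfar : ∀ w ∈ Icc (0 : ℝ) 1, 2 / 3 * |(n : ℝ) + 1 / 2| ≤ |w + n| :=
        fun w hw => far_bound hn.1 hn.2 hw
      have hne : ∀ w ∈ Icc (0 : ℝ) 1, x * (w + n) ≠ 0 := by
        intro w hw
        have h1 := hfar w hw
        have h2 : 0 < |w + n| := by linarith
        exact mul_ne_zero hx.ne' (abs_pos.1 h2)
      set E : ℝ := x * (B * N * (x ^ (-(1 + δ)) * ((3 / 2) ^ (1 + δ) * (1 / |(n : ℝ) + 1 / 2| ^ (1 + δ)))))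
        with hE
      have hder : ∀ w ∈ Icc (0 : ℝ) 1, HasDerivAt (fun w => Gd f M (x * (w + n)))
          (Gl f M (x * (w + n)) * x) w := by
        intro w hw
        have h1 := (Gl_hasDeriv hf.1 (hne w hw)).comp (w + n) (hlin (w + n))
        exact HasDerivAt.comp_add_const w (n : ℝ) h1
      have hbd : ∀ w ∈ Icc (0 : ℝ) 1, ‖Gl f M (x * (w + n)) * x‖ ≤ E := by
        intro w hw
        obtain ⟨h1, h2⟩ := hB f hf hfi _ (hne w hw)
        have h3 := interp_rpow hBN (hne w hw) hδ0 hδ1 h1 h2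
        rw [norm_mul, Real.norm_eq_abs, Real.norm_eq_abs, abs_of_pos hx, mul_comm, hE]
        refine mul_le_mul_of_nonneg_left (h3.trans (mul_le_mul_of_nonneg_left ?_ hBN)) hx.le
        rw [abs_mul, abs_of_pos hx, Real.mul_rpow hx.le (abs_nonneg _)]
        refine mul_le_mul_of_nonneg_left ?_ (Real.rpow_nonneg hx.le _)
        have h4 : (2 / 3 * |(n : ℝ) + 1 / 2|) ^ (1 + δ) ≤ |w + n| ^ (1 + δ) :=
          Real.rpow_le_rpow (by positivity) (hfar w hw) (by linarith)
        rw [Real.rpow_neg (abs_nonneg _), ← one_div]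
        calc 1 / |w + n| ^ (1 + δ) ≤ 1 / (2 / 3 * |(n : ℝ) + 1 / 2|) ^ (1 + δ) :=
              one_div_le_one_div_of_le (Real.rpow_pos_of_pos (by positivity) _) h4
          _ = _ := by
              rw [Real.mul_rpow (by norm_num) (abs_nonneg _), show (3 / 2 : ℝ) = (2 / 3)⁻¹ by norm_num,
                Real.inv_rpow (by norm_num)]
              field_simp
      have h1 := (convex_Icc (0 : ℝ) 1).norm_image_sub_le_of_norm_hasDerivWithin_le
        (fun w hw => (hder w hw).hasDerivWithinAt) hbd hs' hs
      have hE0 : 0 ≤ E := (norm_nonneg _).trans (hbd s hs)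
      have h2 : ‖s - s'‖ ≤ 1 := by
        rw [Real.norm_eq_abs, abs_le]; constructor <;> linarith [hs.1, hs.2, hs'.1, hs'.2]
      have h3 : |Gd f M (x * (s + n)) - Gd f M (x * (s' + n))| ≤ E := by
        rw [← Real.norm_eq_abs]
        exact h1.trans (mul_le_of_le_one_right hE0 h2)
      have hxx : x ^ M * (x * x ^ (-(1 + δ))) = x ^ ((M : ℝ) - δ) := by
        nth_rewrite 2 [← Real.rpow_one x]
        rw [← Real.rpow_add hx, ← Real.rpow_natCast x M, ← Real.rpow_add hx]
        congr 1; ring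
      calc x ^ M * _ ≤ x ^ M * E := mul_le_mul_of_nonneg_left h3 (by positivity)
        _ = ((3 / 2) ^ (1 + δ) * B) * (x ^ M * (x * x ^ (-(1 + δ)))) * N
            * (1 / |(n : ℝ) + 1 / 2| ^ (1 + δ)) := by rw [hE]; ring
        _ ≤ C' * x ^ ((M : ℝ) - δ) * N * (1 / |(n : ℝ) + 1 / 2| ^ (1 + δ)) := by
            rw [hxx]
            have hcc : (3 / 2) ^ (1 + δ) * B ≤ C' := by
              rw [hC']
              have : 0 ≤ 2 * A * Cb ^ δ := by positivity
              linarith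
            gcongr

/-- Corollary of Lemma 9: for integrable `f ∈ C^{M,0}(ℝ)` and
`0 < x ≤ C`, `∫ f(y) h(x,y) dy = f(0) + O(x^{M−δ}(‖f‖_{M,0} + |f|_{L¹}))`. -/
theorem stmt_9 (M : ℕ) (hM : 1 ≤ M) (Cb : ℝ) (hCb : 0 < Cb)
    (δ : ℝ) (hδ0 : 0 < δ) (hδ1 : δ < 1) :
    ∃ C : ℝ, ∀ f : ℝ → ℝ, MemC1 M 0 f → Integrable f →
      ∀ x : ℝ, 0 < x → x ≤ Cb →
        |(∫ y : ℝ, f y * hFun x y) - f 0| ≤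
          C * x ^ ((M : ℝ) - δ) * (wNorm1 M 0 f + ∫ y : ℝ, |f y|) := by
  obtain ⟨C, hC⟩ := main_sum M hM Cb δ hδ0 hδ1
  refine ⟨C / 2, fun f hf hfi x hx hxC => ?_⟩
  have h := hC f hf hfi x hx hxC
  rw [(Gd_hasSum hfi hx).tsum_eq] at h
  have h2 : (∫ y : ℝ, f y * hFun x y) - f 0
      = -(1 / 2) * (2 * f 0 - 2 * ∫ y, f y * hFun x y) := by ring
  rw [h2, abs_mul, abs_neg, abs_of_pos (by norm_num : (0 : ℝ) < 1 / 2)]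
  calc (1 / 2 : ℝ) * _ ≤ 1 / 2 * _ := mul_le_mul_of_nonneg_left h (by norm_num)
    _ = _ := by ring

end
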